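/- (Corollary 4.4.) In U(gl(m,ℂ)), for every q ≥ 0 the Casimir elements satisfy Σ_{p=0}^q binom(q,p)·(−m)^{q−p}·c̃_p = (−1)^q·K_{q+1}(−c) and Σ_{p=0}^q binom(q,p)·(−m)^{q−p}·c_p = (−1)^q·K_{q+1}(−c̃). -/

import Mathlib

open Finset

attribute [local instance 100] LieRing.ofAssociativeRing

/-- `gl(m, ℂ)`: the Lie algebra of `m × m` complex matrices. -/
abbrev glm (m : ℕ) := Matrix (Fin m) (Fin m) ℂ

/-- The universal enveloping algebra `U(gl(m,ℂ))`. -/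
abbrev UEA (m : ℕ) := UniversalEnvelopingAlgebra ℂ (glm m)

/-- The image of the matrix unit `e_{kl}` in `U(gl(m,ℂ))`. -/
noncomputable def E {m : ℕ} (k l : Fin m) : UEA m :=
  UniversalEnvelopingAlgebra.ι ℂ (Matrix.single k l (1 : ℂ))

/-- `e_{kl}^q`, defined by `e_{kl}^0 = δ_{kl}` and `e_{kl}^{q+1} = Σ_i e_{ki} e_{il}^q`. -/
noncomputable def Epow {m : ℕ} : ℕ → Fin m → Fin m → UEA m
  | 0, k, l => if k = l then 1 else 0
  | q + 1, k, l => ∑ i, E k i * Epow q i l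

/-- `ẽ_{kl}^q`, defined by `ẽ_{kl}^0 = δ_{kl}` and `ẽ_{kl}^{q+1} = −Σ_i e_{ik} ẽ_{il}^q`. -/
noncomputable def Etil {m : ℕ} : ℕ → Fin m → Fin m → UEA m
  | 0, k, l => if k = l then 1 else 0
  | q + 1, k, l => -∑ i, E i k * Etil q i l

/-- The Casimir element `c_q = Σ_k e_{kk}^q`. -/
noncomputable def Cas (m : ℕ) (q : ℕ) : UEA m := ∑ k : Fin m, Epow q k k

/-- The Casimir element `c̃_q = Σ_k ẽ_{kk}^q`. -/
noncomputable def CasT (m : ℕ) (q : ℕ) : UEA m := ∑ k : Fin m, Etil q k k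

/-- `K_n(−c) ∈ U(gl(m,ℂ))`: `K_0(−c) = 1` and `K_n(−c) = Σ_{p=0}^{n−1} K_p(−c)·c_{n−1−p}`. -/
noncomputable def Kc (m : ℕ) : ℕ → UEA m
  | 0 => 1
  | n + 1 => ∑ p ∈ (Finset.range (n + 1)).attach, Kc m p.1 * Cas m (n - p.1)
  decreasing_by exact Finset.mem_range.mp p.2

/-- `K_n(−c̃) ∈ U(gl(m,ℂ))`: `K_0(−c̃) = 1` and `K_n(−c̃) = Σ_{p=0}^{n−1} K_p(−c̃)·c̃_{n−1−p}`. -/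
noncomputable def KcT (m : ℕ) : ℕ → UEA m
  | 0 => 1
  | n + 1 => ∑ p ∈ (Finset.range (n + 1)).attach, KcT m p.1 * CasT m (n - p.1)
  decreasing_by exact Finset.mem_range.mp p.2

open Finset Matrix in
theorem gl_key {R : Type*} [Ring R] [Algebra ℂ R] (m : ℕ) (A : Matrix (Fin m) (Fin m) R)
    (h : ∀ i j k l, A i j * A k l - A k l * A i j
      = (if j = k then A i l else 0) - (if l = i then A k j else 0))
    (K : ℕ → R) (K0 : K 0 = 1)
    (KS : ∀ n, K (n + 1) = ∑ p ∈ range (n + 1), K p * trace (A ^ (n - p))) (q : ℕ) :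
    ∑ p ∈ range (q + 1), ((q.choose p : ℂ) * (-(m : ℂ)) ^ (q - p)) • trace ((-Aᵀ) ^ p)
      = (-1 : ℂ) ^ q • K (q + 1) := by
  -- commutation with powers
  have hq : ∀ q i j k l, A i j * (A ^ q) k l - (A ^ q) k l * A i j
      = (if j = k then (A ^ q) i l else 0) - (if l = i then (A ^ q) k j else 0) := by
    intro q
    induction q with
    | zero =>
      intro i j k l
      simp only [pow_zero, Matrix.one_apply]
      have e1 : A i j * (if k = l then (1 : R) else 0) - (if k = l then (1 : R) else 0) * A i j
          = 0 := by
        split_ifs <;> simp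
      rw [e1]
      by_cases h1 : j = k
      · by_cases h2 : l = i
        · rw [if_pos h1, if_pos h2, if_pos h2.symm, if_pos h1.symm, sub_self]
        · rw [if_pos h1, if_neg h2, if_neg (Ne.symm h2), sub_self]
      · rw [if_neg h1, if_neg (Ne.symm h1), ite_self, sub_self]
    | succ q ih =>
      intro i j k l
      simp only [pow_succ', Matrix.mul_apply, Finset.mul_sum, Finset.sum_mul]
      rw [← Finset.sum_sub_distrib]
      have e : ∀ x, A i j * (A k x * (A ^ q) x l) - A k x * (A ^ q) x l * A i j
          = ((if j = k then A i x else 0) - (if x = i then A k j else 0)) * (A ^ q) x l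
            + A k x * ((if j = x then (A ^ q) i l else 0) - (if l = i then (A ^ q) x j else 0)) := by
        intro x
        rw [← h, ← ih]
        noncomm_ring
      simp only [e, sub_mul, mul_sub, ite_mul, mul_ite, zero_mul, mul_zero,
        Finset.sum_add_distrib, Finset.sum_sub_distrib, Finset.sum_ite_eq, Finset.sum_ite_eq',
        Finset.mem_univ, if_true]
      split_ifs <;> simp <;> abel
  have hc : ∀ q i j, Commute (A i j) (trace (A ^ q)) := by
    intro q i j
    rw [commute_iff_eq, ← sub_eq_zero]
    simp only [trace, diag_apply, Finset.mul_sum, Finset.sum_mul]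
    rw [← Finset.sum_sub_distrib]
    simp [hq, Finset.sum_sub_distrib]
  have hcp : ∀ p q i j, Commute ((A ^ p) i j) (trace (A ^ q)) := by
    intro p q
    induction p with
    | zero => intro i j; simp only [pow_zero, Matrix.one_apply]; split_ifs <;> simp
    | succ p ih =>
      intro i j
      simp only [pow_succ', Matrix.mul_apply]
      exact Commute.sum_left _ _ _ fun x _ => (hc q i x).mul_left (ih x j)
  have hcc : ∀ p q, Commute (trace (A ^ p)) (trace (A ^ q)) := fun p q =>
    Commute.sum_left _ _ _ fun x _ => hcp p q x x
  have hK : ∀ n q, Commute (K n) (trace (A ^ q)) := by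
    intro n
    induction n using Nat.strong_induction_on with
    | _ n ih =>
      intro q
      cases n with
      | zero => rw [K0]; exact Commute.one_left _
      | succ n =>
        rw [KS]
        exact Commute.sum_left _ _ _ fun x hx =>
          (ih x (Finset.mem_range.mp hx) q).mul_left (hcc _ q)
  have KS' : ∀ n, K (n + 1) = ∑ p ∈ range (n + 1), trace (A ^ p) * K (n - p) := by
    intro n
    rw [KS, ← Finset.sum_range_reflect]
    refine Finset.sum_congr rfl fun x hx => ?_
    have := Finset.mem_range.mp hx
    rw [show n + 1 - 1 - x = n - x by omega, show n - (n - x) = x by omega]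
    exact hK _ _
  have hF : ∀ q k l, ((Aᵀ + (m : ℂ) • 1) ^ q) k l
      = ∑ p ∈ range (q + 1), (A ^ p) l k * K (q - p) := by
    intro q
    induction q with
    | zero => intro k l; simp [K0, Matrix.one_apply, eq_comm]
    | succ q ih =>
      intro k l
      have step : ∀ p, ∑ i, (Aᵀ + (m : ℂ) • 1) k i * (A ^ p) l i
          = (A ^ (p + 1)) l k + (if k = l then trace (A ^ p) else 0) := by
        intro p
        have e : ∀ i, A i k * (A ^ p) l i = (A ^ p) l i * A i k
            + ((if k = l then (A ^ p) i i else 0) - (A ^ p) l k) := by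
          intro i
          have := hq p i k l i
          rw [if_pos rfl] at this
          rw [← this]; abel
        simp only [Matrix.add_apply, transpose_apply, Matrix.smul_apply, Matrix.one_apply, add_mul,
          e, Finset.sum_add_distrib, Finset.sum_sub_distrib, pow_succ, Matrix.mul_apply]
        have e2 : ∑ i, (if k = l then (A ^ p) i i else 0)
            = if k = l then trace (A ^ p) else 0 := by
          split_ifs <;> simp [trace]
        rw [e2]
        simp [Nat.cast_smul_eq_nsmul]
        abel
      rw [pow_succ', Matrix.mul_apply]
      simp only [ih, Finset.mul_sum]
      rw [Finset.sum_comm]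
      simp only [← mul_assoc, ← Finset.sum_mul, step, add_mul, Finset.sum_add_distrib]
      rw [Finset.sum_range_succ' _ (q + 1)]
      simp only [Nat.add_sub_add_right, Nat.sub_zero, KS' q, pow_zero, Matrix.one_apply]
      congr 1
      by_cases hkl : k = l
      · simp [hkl]
      · simp [hkl, Ne.symm hkl]
  have hT : trace ((Aᵀ + (m : ℂ) • 1) ^ q) = K (q + 1) := by
    simp only [trace, diag_apply, hF]
    rw [Finset.sum_comm, KS']
    simp [trace, Finset.sum_mul]
  have hB : ((-Aᵀ) + (-(m : ℂ)) • 1) ^ q = (-1 : ℂ) ^ q • (Aᵀ + (m : ℂ) • 1) ^ q := by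
    rw [← smul_pow]
    congr 1
    simp
  rw [← hT, ← trace_smul, ← hB, Commute.add_pow ((Commute.one_right _).smul_right _), trace_sum]
  refine Finset.sum_congr rfl fun p _ => ?_
  rw [← trace_smul, smul_pow, one_pow, mul_smul_comm, mul_one, smul_mul_assoc, ← nsmul_eq_mul',
    mul_comm, mul_smul, Nat.cast_smul_eq_nsmul]

theorem E_comm {m : ℕ} (i j k l : Fin m) : E i j * E k l - E k l * E i j
    = (if j = k then E i l else 0) - (if l = i then E k j else 0) := by
  have h := LieHom.map_lie (UniversalEnvelopingAlgebra.ι ℂ (L := glm m))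
    (Matrix.single i j (1 : ℂ)) (Matrix.single k l (1 : ℂ))
  rw [LieRing.of_associative_ring_bracket, LieRing.of_associative_ring_bracket] at h
  unfold E
  rw [← h, map_sub]
  congr 1
  · by_cases hjk : j = k
    · subst hjk; simp
    · simp [hjk]
  · by_cases hjk : l = i
    · subst hjk; simp
    · simp [hjk]

theorem Epow_eq {m : ℕ} (q : ℕ) : ∀ k l : Fin m,
    Epow q k l = ((Matrix.of fun i j : Fin m => E i j) ^ q) k l := by
  induction q with
  | zero => intro k l; simp [Epow, Matrix.one_apply]
  | succ q ih => intro k l; simp [Epow, pow_succ', Matrix.mul_apply, ih]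

theorem Etil_eq {m : ℕ} (q : ℕ) : ∀ k l : Fin m,
    Etil q k l = ((-(Matrix.of fun i j : Fin m => E i j).transpose) ^ q) k l := by
  induction q with
  | zero => intro k l; simp [Etil, Matrix.one_apply]
  | succ q ih => intro k l; rw [pow_succ', Matrix.mul_apply]; simp [Etil, ih]

theorem Cas_eq (m q : ℕ) :
    Cas m q = Matrix.trace ((Matrix.of fun i j : Fin m => E i j) ^ q) := by
  simp [Cas, Matrix.trace, Epow_eq]

theorem CasT_eq (m q : ℕ) :
    CasT m q = Matrix.trace ((-(Matrix.of fun i j : Fin m => E i j).transpose) ^ q) := by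
  simp [CasT, Matrix.trace, Etil_eq]

theorem Kc_succ (m n : ℕ) :
    Kc m (n + 1) = ∑ p ∈ Finset.range (n + 1), Kc m p * Cas m (n - p) := by
  rw [Kc]
  exact Finset.sum_attach (Finset.range (n + 1)) (fun p => Kc m p * Cas m (n - p))

theorem KcT_succ (m n : ℕ) :
    KcT m (n + 1) = ∑ p ∈ Finset.range (n + 1), KcT m p * CasT m (n - p) := by
  rw [KcT]
  exact Finset.sum_attach (Finset.range (n + 1)) (fun p => KcT m p * CasT m (n - p))

/-- Corollary 4.4:
`Σ_{p=0}^q C(q,p) (−m)^{q−p} c̃_p = (−1)^q K_{q+1}(−c)` and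
`Σ_{p=0}^q C(q,p) (−m)^{q−p} c_p = (−1)^q K_{q+1}(−c̃)`. -/
theorem statement14 (m : ℕ) (hm : 1 ≤ m) (q : ℕ) :
    (∑ p ∈ Finset.range (q + 1), ((q.choose p : ℂ) * (-(m : ℂ)) ^ (q - p)) • CasT m p
        = (-1 : ℂ) ^ q • Kc m (q + 1)) ∧
      ∑ p ∈ Finset.range (q + 1), ((q.choose p : ℂ) * (-(m : ℂ)) ^ (q - p)) • Cas m p
        = (-1 : ℂ) ^ q • KcT m (q + 1) := by
  constructor
  · simp only [CasT_eq]
    refine gl_key m (Matrix.of fun i j : Fin m => E i j) ?_ (Kc m) (by rw [Kc]) ?_ q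
    · intro i j k l; simpa using E_comm i j k l
    · intro n; simp only [Kc_succ, Cas_eq]
  · have key := gl_key m (-(Matrix.of fun i j : Fin m => E i j).transpose) ?_ (KcT m)
      (by rw [KcT]) ?_ q
    · simp only [Matrix.transpose_neg, Matrix.transpose_transpose, neg_neg] at key
      simp only [Cas_eq]
      exact key
    · intro i j k l
      have e := E_comm j i l k
      simp only [Matrix.neg_apply, Matrix.transpose_apply, Matrix.of_apply, neg_mul_neg, e,
        eq_comm (a := i) (b := l), eq_comm (a := k) (b := j)]
      split_ifs <;> abel
    · intro n; simp only [KcT_succ, CasT_eq]
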